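/- (Commutator Lipschitzness.) Let U be an invertible bounded linear operator on X (with bounded inverse) and let A ∈ V_{(0,b]}(X) with constant M_A. Then ‖[f(A), U]‖ ≤ M_A² · f′(−0) · ‖[A, U]‖, where [S,T] := ST − TS and f′(−0) := ∫₀^b (1/t) dτ(t). -/

import Mathlib

open MeasureTheory Set Filter

/-- A bounded operator `A` belongs to `V_{(0,b]}(X)` with constant `M` if every `t ∈ (0,b]`
lies in the resolvent set of `A` and `‖R(t,A)‖ ≤ M/t`. -/
def MemV {X : Type*} [NormedAddCommGroup X] [NormedSpace ℂ X]
    (b M : ℝ) (A : X →L[ℂ] X) : Prop :=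
  ∀ t ∈ Ioc (0 : ℝ) b, (t : ℂ) ∈ resolventSet ℂ A ∧ ‖resolvent A (t : ℂ)‖ ≤ M / t

/-- For `f ∈ ZR(0,b]` with representing measure `τ`, the operator
`f(A) = ∫₀^b A·R(t,A) dτ(t)` (a Bochner integral in operator norm). -/
noncomputable def fOp {X : Type*} [NormedAddCommGroup X] [NormedSpace ℂ X] [CompleteSpace X]
    (τ : Measure ℝ) (b : ℝ) (A : X →L[ℂ] X) : X →L[ℂ] X :=
  ∫ t in Ioc (0 : ℝ) b, A * resolvent A (t : ℂ) ∂τ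

/-!
Since `a R(t,a) = t R(t,a) - 1`, the commutator of `a R(t,a)` with `u` is `t` times that of
`R(t,a)`, and `[R(t,a), u] = R(t,a) [a, u] R(t,a)`. The integrand of `[f(a), u]` is therefore of
norm at most `t (M / t) ^ 2 ‖[a, u]‖ = M ^ 2 ‖[a, u]‖ / t`. The same identities hold with `[a, u]`
replaced by `a u - u b`, so that `u = 1` recovers the Lipschitz estimate for `f`.
-/

section Algebra

variable {R A : Type*}

theorem resolvent_algebraMap {S : Type*} [CommSemiring R] [CommSemiring S] [Ring A] [Algebra R S]
    [Algebra S A] [Algebra R A] [IsScalarTower R S A] (a : A) (r : R) :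
    resolvent a (algebraMap R S r) = resolvent a r := by
  rw [resolvent, resolvent, ← IsScalarTower.algebraMap_apply]

theorem algebraMap_mem_resolventSet_iff {S : Type*} [CommSemiring R] [CommSemiring S] [Ring A]
    [Algebra R S] [Algebra S A] [Algebra R A] [IsScalarTower R S A] {a : A} {r : R} :
    algebraMap R S r ∈ resolventSet S a ↔ r ∈ resolventSet R a := by
  rw [spectrum.mem_resolventSet_iff, spectrum.mem_resolventSet_iff,
    ← IsScalarTower.algebraMap_apply]

variable [CommRing R] [Ring A] [Algebra R A] {a b : A} {r : R}

theorem mul_resolvent_eq_smul_sub_one (hr : r ∈ resolventSet R a) :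
    a * resolvent a r = r • resolvent a r - 1 := by
  have right_inv : (algebraMap R A r - a) * resolvent a r = 1 := Ring.mul_inverse_cancel _ hr
  rw [← right_inv, sub_mul, Algebra.smul_def, sub_sub_cancel]

theorem resolvent_mul_eq_smul_sub_one (hr : r ∈ resolventSet R a) :
    resolvent a r * a = r • resolvent a r - 1 := by
  have left_inv : resolvent a r * (algebraMap R A r - a) = 1 := Ring.inverse_mul_cancel _ hr
  rw [← left_inv, mul_sub, Algebra.smul_def, Algebra.commutes, sub_sub_cancel]

theorem resolvent_mul_sub_mul_resolvent (ha : r ∈ resolventSet R a) (hb : r ∈ resolventSet R b)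
    (u : A) :
    resolvent a r * u - u * resolvent b r =
      resolvent a r * (a * u - u * b) * resolvent b r := by
  calc resolvent a r * u - u * resolvent b r
      = (r • resolvent a r - 1) * u * resolvent b r -
          resolvent a r * u * (r • resolvent b r - 1) := by
        simp only [sub_mul, mul_sub, smul_mul_assoc, mul_smul_comm, one_mul, mul_one]
        abel
    _ = resolvent a r * (a * u - u * b) * resolvent b r := by
        rw [← resolvent_mul_eq_smul_sub_one ha, ← mul_resolvent_eq_smul_sub_one hb]
        noncomm_ring

theorem mul_resolvent_mul_sub_mul_mul_resolvent (ha : r ∈ resolventSet R a)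
    (hb : r ∈ resolventSet R b) (u : A) :
    a * resolvent a r * u - u * (b * resolvent b r) =
      r • (resolvent a r * (a * u - u * b) * resolvent b r) := by
  rw [← resolvent_mul_sub_mul_resolvent ha hb, mul_resolvent_eq_smul_sub_one ha,
    mul_resolvent_eq_smul_sub_one hb, sub_one_mul, mul_sub_one, smul_mul_assoc, mul_smul_comm,
    sub_sub_sub_cancel_right, smul_sub]

end Algebra

section NormedAlgebra

theorem continuousOn_resolvent {𝕜 A : Type*} [NontriviallyNormedField 𝕜] [NormedRing A]
    [NormedAlgebra 𝕜 A] [CompleteSpace A] (a : A) :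
    ContinuousOn (resolvent a : 𝕜 → A) (resolventSet 𝕜 a) :=
  HasDerivAt.continuousOn fun _ => spectrum.hasDerivAt_resolvent_const_left

variable {A : Type*} [NormedRing A] [NormedAlgebra ℝ A] {a b : A} {s t M N : ℝ}

theorem norm_mul_resolvent_le (ht : 0 < t) (ha : t ∈ resolventSet ℝ a)
    (hM : ‖resolvent a t‖ ≤ M / t) :
    ‖a * resolvent a t‖ ≤ M + ‖(1 : A)‖ := by
  rw [mul_resolvent_eq_smul_sub_one ha]
  refine (norm_sub_le _ _).trans (add_le_add_left ?_ _)
  rwa [norm_smul, Real.norm_of_nonneg ht.le, ← le_div_iff₀' ht]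

theorem norm_mul_resolvent_mul_sub_mul_mul_resolvent_le (ht : 0 < t)
    (ha : t ∈ resolventSet ℝ a) (hM : ‖resolvent a t‖ ≤ M / t)
    (hb : t ∈ resolventSet ℝ b) (hN : ‖resolvent b t‖ ≤ N / t) (u : A) :
    ‖a * resolvent a t * u - u * (b * resolvent b t)‖ ≤
      M * N * (1 / t) * ‖a * u - u * b‖ := by
  have hM₀ : 0 ≤ M / t := (norm_nonneg _).trans hM
  rw [mul_resolvent_mul_sub_mul_mul_resolvent ha hb, norm_smul, Real.norm_of_nonneg ht.le]
  calc t * ‖resolvent a t * (a * u - u * b) * resolvent b t‖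
      ≤ t * (‖resolvent a t‖ * ‖a * u - u * b‖ * ‖resolvent b t‖) := by
        gcongr
        exact norm_mul₃_le
    _ ≤ t * (M / t * ‖a * u - u * b‖ * (N / t)) := by gcongr
    _ = M * N * (1 / t) * ‖a * u - u * b‖ := by field_simp

variable [CompleteSpace A] {τ : Measure ℝ}

theorem integrableOn_mul_resolvent (hτ : IntegrableOn (fun t : ℝ => 1 / t) (Ioc 0 s) τ)
    (ha : ∀ t ∈ Ioc 0 s, t ∈ resolventSet ℝ a ∧ ‖resolvent a t‖ ≤ M / t) :
    IntegrableOn (fun t : ℝ => a * resolvent a t) (Ioc 0 s) τ := by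
  have continuousOn_integrand : ContinuousOn (fun t : ℝ => a * resolvent a t) (Ioc 0 s) :=
    continuousOn_const.mul ((continuousOn_resolvent a).mono fun t ht => (ha t ht).1)
  refine (hτ.const_mul ((M + ‖(1 : A)‖) * s)).mono'
    (continuousOn_integrand.aestronglyMeasurable measurableSet_Ioc)
    (ae_restrict_of_forall_mem measurableSet_Ioc fun t ht => ?_)
  have norm_le := norm_mul_resolvent_le ht.1 (ha t ht).1 (ha t ht).2
  calc ‖a * resolvent a t‖
      ≤ M + ‖(1 : A)‖ := norm_le
    _ ≤ (M + ‖(1 : A)‖) * (s / t) :=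
        le_mul_of_one_le_right ((norm_nonneg _).trans norm_le) ((one_le_div ht.1).2 ht.2)
    _ = (M + ‖(1 : A)‖) * s * (1 / t) := by ring

theorem fOp_commutator_lipschitz_general
    (hτ : IntegrableOn (fun t : ℝ => 1 / t) (Ioc 0 s) τ)
    (ha : ∀ t ∈ Ioc 0 s, t ∈ resolventSet ℝ a ∧ ‖resolvent a t‖ ≤ M / t)
    (hb : ∀ t ∈ Ioc 0 s, t ∈ resolventSet ℝ b ∧ ‖resolvent b t‖ ≤ N / t) (u : A) :
    ‖(∫ t in Ioc 0 s, a * resolvent a t ∂τ) * u - u * ∫ t in Ioc 0 s, b * resolvent b t ∂τ‖ ≤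
      M * N * (∫ t in Ioc 0 s, 1 / t ∂τ) * ‖a * u - u * b‖ := by
  have integrable_a := integrableOn_mul_resolvent hτ ha
  have integrable_b := integrableOn_mul_resolvent hτ hb
  rw [← integral_mul_const_of_integrable integrable_a,
    ← integral_const_mul_of_integrable integrable_b,
    ← integral_sub (integrable_a.mul_const u) (integrable_b.const_mul u),
    ← integral_const_mul, ← integral_mul_const]
  refine norm_integral_le_of_norm_le ((hτ.const_mul _).mul_const _)
    (ae_restrict_of_forall_mem measurableSet_Ioc fun t ht => ?_)
  obtain ⟨mem_a, norm_a_le⟩ := ha t ht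
  obtain ⟨mem_b, norm_b_le⟩ := hb t ht
  exact norm_mul_resolvent_mul_sub_mul_mul_resolvent_le ht.1 mem_a norm_a_le mem_b norm_b_le u

end NormedAlgebra

section Operator

variable {X : Type*} [NormedAddCommGroup X] [NormedSpace ℂ X]

theorem memV_iff_real {b M : ℝ} {A : X →L[ℂ] X} :
    MemV b M A ↔ ∀ t ∈ Ioc 0 b, t ∈ resolventSet ℝ A ∧ ‖resolvent A t‖ ≤ M / t := by
  simp only [MemV, ← Complex.coe_algebraMap, resolvent_algebraMap, algebraMap_mem_resolventSet_iff]

theorem fOp_eq_integral_resolvent_real [CompleteSpace X] (τ : Measure ℝ) (b : ℝ)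
    (A : X →L[ℂ] X) :
    fOp τ b A = ∫ t in Ioc 0 b, A * resolvent A t ∂τ := by
  simp only [fOp, ← Complex.coe_algebraMap, resolvent_algebraMap]

end Operator

/-- Corollary 4 (commutator Lipschitzness, operator-norm case): for an automorphism `U` of `X`
and `A ∈ V_{(0,b]}(X)`, `‖[f(A),U]‖ ≤ M_A²·f′(−0)·‖[A,U]‖`. -/
theorem fOp_commutator_lipschitz {X : Type*} [NormedAddCommGroup X] [NormedSpace ℂ X]
    [CompleteSpace X] (b : ℝ) (hb : 0 < b) (τ : Measure ℝ) [IsFiniteMeasure τ]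
    (hτ : IntegrableOn (fun t : ℝ => 1 / t) (Ioc 0 b) τ)
    (U V : X →L[ℂ] X) (hUV : U * V = 1) (hVU : V * U = 1)
    (MA : ℝ) (hMA : 0 < MA) (A : X →L[ℂ] X) (hA : MemV b MA A) :
    ‖fOp τ b A * U - U * fOp τ b A‖ ≤
      MA ^ 2 * (∫ t in Ioc (0 : ℝ) b, 1 / t ∂τ) * ‖A * U - U * A‖ := by
  rw [fOp_eq_integral_resolvent_real, sq]
  exact fOp_commutator_lipschitz_general hτ (memV_iff_real.1 hA) (memV_iff_real.1 hA) U
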